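/- Let d be a positive integer with ν₂(d) ≥ 3 and set δ = ν₂(d) − 2. Then for every positive integer n, ν₂(W_d(n)) ≥ 3·s₂(n) + δ. -/

import Mathlib

/-- `Wstar d n` is the number of Abelian squares: the sum over all tuples
`(x₁,…,x_d)` of nonnegative integers summing to `n` of the square of the
multinomial coefficient `n!/(x₁!⋯x_d!)`. -/
def Wstar (d n : ℕ) : ℕ :=
  ∑ x ∈ Finset.Nat.antidiagonalTuple d n, (Nat.multinomial Finset.univ x) ^ 2

/-- `W d n` is the number of `2n`-step closed walks at the origin in `ℤ^d`. -/
def W (d n : ℕ) : ℕ := Nat.choose (2 * n) n * Wstar d n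

/-- `s2 n` is the number of ones in the binary expansion of `n`. -/
def s2 (n : ℕ) : ℕ := (Nat.digits 2 n).sum

/-! `W*₄(n)` is the constant term of `(f g)ⁿ`, where `f` is the sum of the four Laurent monomials
whose exponents are the vertices of a regular tetrahedron (closed walks on the diamond lattice) and
`g` is obtained from `f` by inverting the variables. Two consecutive steps of the diamond lattice
make a step of the face-centred cubic lattice: `f g = 4 + QR + PR + PQ` with `P = x² + x⁻²`,
`Q = y² + y⁻²`, `R = z² + z⁻²`. In the multinomial expansion of the `n`-th power,
`P^(j+k) Q^(i+k) R^(i+j)` has as constant term `0` or a product of central binomial coefficients,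
and Legendre's formula together with the subadditivity of `s₂` shows that every summand is divisible
by `2 ^ (2 s₂(n))`.

Since `W*_{c+d}(n) = ∑ (n choose k)² W*_c(k) W*_d(n-k)`, Kummer's theorem transfers a divisibility
by `2 ^ (2 s₂(n) + e)` from `c` and `d` to `c + d`. When `c = d` the off-diagonal summands pair up
under `k ↔ n - k`, which gains a factor `2`, and the diagonal one gains from `(2k choose k)²`. -/

open Finset

theorem s2_le_self (n : ℕ) : s2 n ≤ n := Nat.digit_sum_le 2 n

theorem s2_two_mul (n : ℕ) : s2 (2 * n) = s2 n := by
  rcases n.eq_zero_or_pos with rfl | hn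
  · rfl
  · simp [s2, Nat.digits_base_mul one_lt_two hn]

theorem padicValNat_two_factorial_add_s2 (n : ℕ) : padicValNat 2 n.factorial + s2 n = n := by
  have legendre : (2 - 1) * padicValNat 2 n.factorial = n - s2 n :=
    sub_one_mul_padicValNat_factorial n
  have := s2_le_self n
  omega

theorem s2_pos {n : ℕ} (hn : 0 < n) : 0 < s2 n := by
  have := padicValNat_two_factorial_add_s2 n
  have := sub_one_mul_padicValNat_factorial_lt_of_ne_zero 2 hn.ne'
  omega

theorem padicValNat_two_choose_add_s2 (k l : ℕ) :
    padicValNat 2 ((k + l).choose k) + s2 (k + l) = s2 k + s2 l := by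
  have hfact := congrArg (padicValNat 2) (Nat.add_choose_mul_factorial_mul_factorial k l)
  rw [← Nat.choose_symm_add, mul_assoc,
    padicValNat.mul (Nat.choose_pos (Nat.le_add_right k l)).ne' (by positivity),
    padicValNat.mul k.factorial_ne_zero l.factorial_ne_zero] at hfact
  have := padicValNat_two_factorial_add_s2 k
  have := padicValNat_two_factorial_add_s2 l
  have := padicValNat_two_factorial_add_s2 (k + l)
  omega

theorem s2_add_le (k l : ℕ) : s2 (k + l) ≤ s2 k + s2 l := by
  have := padicValNat_two_choose_add_s2 k l
  omega

theorem padicValNat_two_multinomial_add_s2 {ι : Type*} (s : Finset ι) (f : ι → ℕ) :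
    padicValNat 2 (Nat.multinomial s f) + s2 (∑ i ∈ s, f i) = ∑ i ∈ s, s2 (f i) := by
  induction s using Finset.cons_induction with
  | empty => simp [s2]
  | cons i s hi ih =>
    rw [Nat.multinomial_cons hi, sum_cons, sum_cons,
      padicValNat.mul (Nat.choose_pos (Nat.le_add_right _ _)).ne' (Nat.multinomial_pos s f).ne']
    have := padicValNat_two_choose_add_s2 (f i) (∑ j ∈ s, f j)
    omega

theorem two_pow_s2_dvd_choose_two_mul (k : ℕ) : 2 ^ s2 k ∣ (2 * k).choose k := by
  have hval := padicValNat_two_choose_add_s2 k k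
  rw [← two_mul, s2_two_mul] at hval
  rw [padicValNat_dvd_iff_le (Nat.choose_pos (by lia)).ne']
  lia

theorem dvd_sum_of_involution {ι : Type*} {s : Finset ι} {f : ι → ℕ} {m : ℕ} (g : ι → ι)
    (hpair : ∀ i ∈ s, m ∣ f i + f (g i)) (hfix : ∀ i ∈ s, g i = i → m ∣ f i)
    (hmem : ∀ i ∈ s, g i ∈ s) (hinv : ∀ i ∈ s, g (g i) = i) : m ∣ ∑ i ∈ s, f i := by
  simp only [← ZMod.natCast_eq_zero_iff, Nat.cast_add, Nat.cast_sum] at *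
  exact sum_involution (fun i _ ↦ g i) hpair (fun i hi hne h ↦ hne (hfix i hi h)) hmem hinv

theorem Wstar_eq_sum_piAntidiag (d n : ℕ) :
    Wstar d n = ∑ x ∈ piAntidiag (univ : Finset (Fin d)) n, Nat.multinomial univ x ^ 2 := by
  rw [Wstar, piAntidiag_univ_fin_eq_antidiagonalTuple]

theorem Wstar_zero_right (d : ℕ) : Wstar d 0 = 1 := by
  simp [Wstar, Nat.antidiagonalTuple_zero_right, Nat.multinomial]

theorem Wstar_zero_left {n : ℕ} (hn : 0 < n) : Wstar 0 n = 0 := by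
  simp [Wstar_eq_sum_piAntidiag, hn.ne']

theorem Wstar_pos {d : ℕ} (hd : 0 < d) (n : ℕ) : 0 < Wstar d n := by
  rw [Wstar_eq_sum_piAntidiag]
  exact sum_pos (fun x _ ↦ pow_pos (Nat.multinomial_pos _ _) 2)
    ⟨Pi.single ⟨0, hd⟩ n, by simp⟩

/-- The power series `∑ zⁿ / n!²`, whose `d`-th power generates `W*_d(n) / n!²`. -/
noncomputable def besselSeries : PowerSeries ℚ :=
  .mk fun n ↦ 1 / (n.factorial : ℚ) ^ 2

theorem coeff_besselSeries_pow (d n : ℕ) :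
    PowerSeries.coeff n (besselSeries ^ d) = Wstar d n / (n.factorial : ℚ) ^ 2 := by
  have hterm {x : Fin d → ℕ} (hx : ∑ i, x i = n) :
      ∏ i, 1 / ((x i).factorial : ℚ) ^ 2 =
        (Nat.multinomial univ x : ℚ) ^ 2 / (n.factorial : ℚ) ^ 2 := by
    have hspec : (∏ i, ((x i).factorial : ℚ)) * Nat.multinomial univ x = n.factorial := by
      exact_mod_cast hx ▸ Nat.multinomial_spec univ x
    have hmul : (Nat.multinomial univ x : ℚ) ≠ 0 := by exact_mod_cast (Nat.multinomial_pos _ _).ne'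
    rw [← hspec, prod_div_distrib, prod_pow, prod_const_one]
    field_simp
  rw [← Fin.prod_const, PowerSeries.coeff_prod, Wstar_eq_sum_piAntidiag, Nat.cast_sum, sum_div]
  refine sum_nbij (⇑) (fun x hx ↦ by simpa using hx) DFunLike.coe_injective.injOn
    (fun x hx ↦ ⟨Finsupp.equivFunOnFinite.symm x, by simpa using hx, rfl⟩) fun x hx ↦ ?_
  simpa [besselSeries] using hterm (x := x) (by simpa using hx)

theorem Wstar_add (c d n : ℕ) :
    Wstar (c + d) n =
      ∑ x ∈ antidiagonal n, n.choose x.1 ^ 2 * (Wstar c x.1 * Wstar d x.2) := by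
  have hfact : (n.factorial : ℚ) ≠ 0 := mod_cast n.factorial_ne_zero
  have hcoeff := coeff_besselSeries_pow (c + d) n
  rw [pow_add, PowerSeries.coeff_mul, eq_div_iff (pow_ne_zero 2 hfact), sum_mul] at hcoeff
  rw [← Nat.cast_inj (R := ℚ), ← hcoeff, Nat.cast_sum]
  refine sum_congr rfl fun x hx ↦ ?_
  rw [HasAntidiagonal.mem_antidiagonal] at hx
  have hchoose : (n.choose x.1 : ℚ) = n.factorial / (x.1.factorial * x.2.factorial) := by
    rw [← hx, Nat.cast_add_choose]
  push_cast
  rw [hchoose, coeff_besselSeries_pow, coeff_besselSeries_pow]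
  ring

section ConstantTerm

open AddMonoidAlgebra

variable {A ι : Type*} [AddCommGroup A]

theorem sum_single_pow {R : Type*} [CommSemiring R] [Fintype ι] [DecidableEq ι] (v : ι → A)
    (n : ℕ) :
    (∑ i, single (v i) 1 : R[A]) ^ n =
      ∑ x ∈ piAntidiag univ n, single (∑ i, x i • v i) (Nat.multinomial univ x : R) := by
  simp only [sum_pow_eq_sum_piAntidiag, single_pow, prod_single, one_pow, prod_const_one,
    ← nsmul_eq_mul, smul_single, nsmul_one]

theorem sum_nsmul_inj_of_affineIndependent [Fintype ι] {v : ι → A}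
    (hv : AffineIndependent ℤ v) {x y : ι → ℕ} (hxy : ∑ i, x i = ∑ i, y i) :
    ∑ i, x i • v i = ∑ i, y i • v i ↔ x = y := by
  refine ⟨fun h ↦ funext fun i ↦ ?_, fun h ↦ h ▸ rfl⟩
  have hdiff : (x i : ℤ) - y i = 0 :=
    hv.eq_zero_of_sum_eq_zero (s := univ) (w := fun i ↦ (x i : ℤ) - y i)
      (by simp [← Nat.cast_sum, hxy]) (by simp [sub_smul, h]) i (mem_univ i)
  lia

theorem coeff_zero_sum_single_pow_mul {d : ℕ} {v : Fin d → A} (hv : AffineIndependent ℤ v)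
    (n : ℕ) :
    ((∑ i, single (v i) 1 : ℕ[A]) ^ n * (∑ i, single (-v i) 1) ^ n).coeff 0 = Wstar d n := by
  classical
  simp only [sum_single_pow, sum_mul_sum, single_mul_single, coeff_sum, Finsupp.finsetSum_apply,
    coeff_single, Finsupp.single_apply, smul_neg, sum_neg_distrib, ← sub_eq_add_neg, sub_eq_zero]
  rw [Wstar_eq_sum_piAntidiag]
  refine sum_congr rfl fun x hx ↦ ?_
  have hiff {y : Fin d → ℕ} (hy : y ∈ piAntidiag univ n) :
      ∑ i, x i • v i = ∑ i, y i • v i ↔ x = y :=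
    sum_nsmul_inj_of_affineIndependent hv
      ((mem_piAntidiag.1 hx).1.trans (mem_piAntidiag.1 hy).1.symm)
  rw [sum_congr rfl fun y hy ↦ if_congr (hiff hy) rfl rfl, sum_ite_eq, if_pos hx, sq, Nat.cast_id]

/-- The Laurent polynomial `X + X⁻¹`, where `X` is the monomial with exponent `u`. The constant
terms of its even powers are central binomial coefficients if `u` has infinite order. -/
noncomputable def monomialAddInv (u : A) : ℕ[A] := single u 1 + single (-u) 1

theorem monomialAddInv_pow (u : A) (n : ℕ) :
    monomialAddInv u ^ n =
      ∑ r ∈ range (n + 1), single ((2 * r - n : ℤ) • u) (n.choose r) := by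
  rw [monomialAddInv, add_pow]
  refine sum_congr rfl fun r hr ↦ ?_
  have hexponent : r • u + (n - r) • -u = (2 * r - n : ℤ) • u := by
    rw [← natCast_zsmul, ← natCast_zsmul, Nat.cast_sub (mem_range_succ_iff.1 hr)]
    module
  rw [single_pow, single_pow, single_mul_single, hexponent, mul_comm, ← nsmul_eq_mul, smul_single]
  simp

theorem two_pow_dvd_coeff_zero_prod_monomialAddInv_pow [Fintype ι] {u : ι → A}
    (hu : LinearIndependent ℤ u) (a : ι → ℕ) :
    2 ^ ∑ i, s2 (a i) ∣ (∏ i, monomialAddInv (u i) ^ a i).coeff 0 := by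
  classical
  simp only [monomialAddInv_pow, prod_univ_sum, prod_single, coeff_sum, Finsupp.finsetSum_apply,
    coeff_single, Finsupp.single_apply]
  refine dvd_sum fun r _ ↦ ?_
  split_ifs with hr
  · rw [← prod_pow_eq_pow_sum]
    refine prod_dvd_prod_of_dvd _ _ fun i _ ↦ ?_
    have hmiddle : a i = 2 * r i := by
      have := Fintype.linearIndependent_iff.1 hu _ hr i
      lia
    rw [hmiddle, s2_two_mul]
    exact two_pow_s2_dvd_choose_two_mul (r i)
  · exact dvd_zero _

end ConstantTerm

section DiamondLattice

open AddMonoidAlgebra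

/-- The vertices of a regular tetrahedron: the four bond directions of the diamond lattice. -/
def tetrahedron : Fin 4 → Fin 3 → ℤ := ![![1, 1, 1], ![1, -1, -1], ![-1, 1, -1], ![-1, -1, 1]]

theorem affineIndependent_tetrahedron : AffineIndependent ℤ tetrahedron := by
  rw [affineIndependent_iff_of_fintype]
  intro w hw hcomb i
  rw [univ.weightedVSub_eq_linear_combination hw] at hcomb
  have h0 := congrFun hcomb 0
  have h1 := congrFun hcomb 1
  have h2 := congrFun hcomb 2
  simp only [tetrahedron, Fin.sum_univ_four, Pi.add_apply, Pi.smul_apply, Pi.zero_apply,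
    Matrix.cons_val, smul_eq_mul] at hw h0 h1 h2
  fin_cases i <;> simp only [Fin.reduceFinMk] <;> lia

/-- Twice the `i`-th unit vector: the exponent of `xᵢ²`, the square because the differences of
`tetrahedron` vertices have coordinates in `{0, 2, -2}`. -/
def doubledAxis {ι : Type*} [DecidableEq ι] (i : ι) : ι → ℤ := Pi.single i 2

theorem linearIndependent_doubledAxis {ι : Type*} [DecidableEq ι] :
    LinearIndependent ℤ (doubledAxis : ι → ι → ℤ) := by
  rw [linearIndependent_iff']
  intro s w hw i hi
  simpa [doubledAxis, Pi.single_apply, hi] using congrFun hw i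

/-- The Laurent polynomial `xᵢ² + xᵢ⁻²` in three variables: `P`, `Q`, `R` for `i = 0, 1, 2`. -/
noncomputable def axisPair (i : Fin 3) : ℕ[Fin 3 → ℤ] := monomialAddInv (doubledAxis i)

/-- The summands `4, QR, PR, PQ` of the step polynomial of the face-centred cubic lattice with four
stationary steps in the notation of `axisPair`. -/
noncomputable def fccStep : Fin 4 → ℕ[Fin 3 → ℤ] :=
  ![4, axisPair 1 * axisPair 2, axisPair 0 * axisPair 2, axisPair 0 * axisPair 1]

theorem tetrahedron_mul_neg_eq_sum_fccStep :
    (∑ i, single (tetrahedron i) 1 : ℕ[Fin 3 → ℤ]) * ∑ i, single (-tetrahedron i) 1 =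
      ∑ i, fccStep i := by
  have hx : (doubledAxis 0 : Fin 3 → ℤ) = ![2, 0, 0] := by decide
  have hy : (doubledAxis 1 : Fin 3 → ℤ) = ![0, 2, 0] := by decide
  have hz : (doubledAxis 2 : Fin 3 → ℤ) = ![0, 0, 2] := by decide
  have hone : (single ![0, 0, 0] 1 : ℕ[Fin 3 → ℤ]) = 1 := by
    rw [one_def, show ![0, 0, 0] = (0 : Fin 3 → ℤ) by decide]
  simp only [fccStep, axisPair, monomialAddInv, tetrahedron, Fin.sum_univ_four, Matrix.cons_val,
    hx, hy, hz, mul_add, add_mul, single_mul_single, Matrix.neg_cons, Matrix.neg_empty,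
    Matrix.add_cons, Matrix.head_cons, Matrix.tail_cons, Matrix.empty_add_empty, Int.reduceNeg,
    Int.reduceAdd, neg_neg, neg_zero, add_zero, zero_add, add_neg_cancel, neg_add_cancel, mul_one,
    hone]
  ring

theorem multinomial_mul_prod_fccStep_pow (x : Fin 4 → ℕ) :
    Nat.multinomial univ x * ∏ i, fccStep i ^ x i =
      (Nat.multinomial univ x * 4 ^ x 0) •
        ∏ i, axisPair i ^ ![x 2 + x 3, x 1 + x 3, x 1 + x 2] i := by
  simp only [fccStep, Fin.prod_univ_four, Fin.prod_univ_three, Matrix.cons_val, nsmul_eq_mul]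
  push_cast
  ring

theorem two_pow_dvd_coeff_zero_multinomial_mul_prod_fccStep_pow (x : Fin 4 → ℕ) :
    2 ^ (2 * s2 (∑ i, x i)) ∣ (Nat.multinomial univ x * ∏ i, fccStep i ^ x i).coeff 0 := by
  have hmultinomial := padicValNat_two_multinomial_add_s2 univ x
  have hconst := two_pow_dvd_coeff_zero_prod_monomialAddInv_pow
    linearIndependent_doubledAxis ![x 2 + x 3, x 1 + x 3, x 1 + x 2]
  have hfour : 2 ^ (2 * x 0) ∣ 4 ^ x 0 := (pow_mul 2 2 (x 0)).dvd
  have hdvd := mul_dvd_mul (mul_dvd_mul (pow_padicValNat_dvd (p := 2) (n := Nat.multinomial univ x))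
    hfour) hconst
  rw [multinomial_mul_prod_fccStep_pow, coeff_smul, Finsupp.smul_apply, smul_eq_mul]
  rw [← pow_add, ← pow_add] at hdvd
  refine (pow_dvd_pow 2 ?_).trans hdvd
  simp only [Fin.sum_univ_four, Fin.sum_univ_three, Matrix.cons_val] at hmultinomial ⊢
  have := s2_le_self (x 0)
  have := s2_add_le (x 0) (x 1 + x 2 + x 3)
  have := s2_add_le (x 1) (x 2 + x 3)
  have := s2_add_le (x 2) (x 1 + x 3)
  have := s2_add_le (x 3) (x 1 + x 2)
  grind

theorem two_pow_dvd_Wstar_four (n : ℕ) : 2 ^ (2 * s2 n) ∣ Wstar 4 n := by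
  rw [← coeff_zero_sum_single_pow_mul affineIndependent_tetrahedron, ← mul_pow,
    tetrahedron_mul_neg_eq_sum_fccStep, sum_pow_eq_sum_piAntidiag, coeff_sum,
    Finsupp.finsetSum_apply]
  refine dvd_sum fun x hx ↦ ?_
  obtain ⟨rfl, -⟩ := mem_piAntidiag.1 hx
  exact two_pow_dvd_coeff_zero_multinomial_mul_prod_fccStep_pow x

end DiamondLattice

/-- The dimension `d` has excess `e` if `2 ^ (2 * s2 n + e)` divides `W*_d(n)` for every positive
`n`; at `n = 0` this would fail for `e > 0`, because `W*_d(0) = 1`. The theorem amounts to excess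
`δ` for multiples of `2 ^ (δ + 2)`. -/
def HasExcess (d e : ℕ) : Prop := ∀ n, 0 < n → 2 ^ (2 * s2 n + e) ∣ Wstar d n

namespace HasExcess

variable {c d e f k l : ℕ}

theorem dvd_choose_sq_mul_of_pos (hc : HasExcess c e) (hd : HasExcess d f) (hk : 0 < k)
    (hl : 0 < l) :
    2 ^ (2 * s2 (k + l) + 4 * padicValNat 2 ((k + l).choose k) + (e + f)) ∣
      (k + l).choose k ^ 2 * (Wstar c k * Wstar d l) := by
  have hdvd := mul_dvd_mul
    (pow_dvd_pow_of_dvd (pow_padicValNat_dvd (p := 2) (n := (k + l).choose k)) 2)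
    (mul_dvd_mul (hc k hk) (hd l hl))
  rw [← pow_mul, ← pow_add, ← pow_add] at hdvd
  refine (pow_dvd_pow 2 ?_).trans hdvd
  have := padicValNat_two_choose_add_s2 k l
  lia

theorem dvd_choose_sq_mul (hc : HasExcess c e) (hd : HasExcess d e) (h : 0 < k + l) :
    2 ^ (2 * s2 (k + l) + e) ∣ (k + l).choose k ^ 2 * (Wstar c k * Wstar d l) := by
  rcases k.eq_zero_or_pos with rfl | hk
  · simpa [Wstar_zero_right] using hd l (by lia)
  rcases l.eq_zero_or_pos with rfl | hl
  · simpa [Wstar_zero_right] using hc k hk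
  refine (pow_dvd_pow 2 ?_).trans (hc.dvd_choose_sq_mul_of_pos hd hk hl)
  lia

theorem add (hc : HasExcess c e) (hd : HasExcess d e) : HasExcess (c + d) e := by
  intro n hn
  rw [Wstar_add]
  refine dvd_sum fun x hx ↦ ?_
  obtain rfl := HasAntidiagonal.mem_antidiagonal.1 hx
  exact hc.dvd_choose_sq_mul hd hn

theorem mul_left (hd : HasExcess d e) (m : ℕ) : HasExcess (m * d) e := by
  induction m with
  | zero =>
    intro n hn
    simp [Wstar_zero_left hn]
  | succ m ih => exact add_one_mul m d ▸ ih.add hd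

theorem two_mul (hd : HasExcess d e) : HasExcess (2 * d) (e + 1) := by
  intro n hn
  rw [_root_.two_mul d, Wstar_add]
  refine dvd_sum_of_involution Prod.swap ?_ ?_ (fun x hx ↦ by simpa [add_comm] using hx) (by simp)
  · rintro ⟨k, l⟩ hx
    obtain rfl := HasAntidiagonal.mem_antidiagonal.1 hx
    have hswap : (k + l).choose l ^ 2 * (Wstar d l * Wstar d k) =
        (k + l).choose k ^ 2 * (Wstar d k * Wstar d l) := by
      rw [Nat.choose_symm_add, mul_comm (Wstar d l)]
    rw [Prod.swap_prod_mk, hswap, ← _root_.two_mul, ← add_assoc, pow_succ']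
    exact mul_dvd_mul_left 2 (hd.dvd_choose_sq_mul hd hn)
  · rintro ⟨k, l⟩ hx hkl
    obtain rfl : l = k := congrArg Prod.fst hkl
    obtain rfl := HasAntidiagonal.mem_antidiagonal.1 hx
    have hl : 0 < l := by lia
    refine (pow_dvd_pow 2 ?_).trans (hd.dvd_choose_sq_mul_of_pos hd hl hl)
    have hs2 : s2 (l + l) = s2 l := _root_.two_mul l ▸ s2_two_mul l
    have := padicValNat_two_choose_add_s2 l l
    have := s2_pos hl
    lia

end HasExcess

theorem hasExcess_two_pow_mul_four (e : ℕ) : HasExcess (2 ^ e * 4) e := by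
  induction e with
  | zero => exact fun n _ ↦ two_pow_dvd_Wstar_four n
  | succ e ih =>
    rw [pow_succ', mul_assoc]
    exact ih.two_mul

theorem hasExcess_of_two_pow_dvd {d e : ℕ} (h : 2 ^ (e + 2) ∣ d) : HasExcess d e := by
  obtain ⟨m, rfl⟩ := h
  rw [pow_add, mul_comm]
  exact (hasExcess_two_pow_mul_four e).mul_left m

theorem stmt_4_general (d n : ℕ) (hd : 2 ≤ padicValNat 2 d) (hn : 0 < n) :
    3 * s2 n + (padicValNat 2 d - 2) ≤ padicValNat 2 (W d n) := by
  obtain ⟨e, he⟩ : ∃ e, padicValNat 2 d = e + 2 := Nat.exists_eq_add_of_le' hd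
  have hd_pos : 0 < d := Nat.pos_of_ne_zero fun h ↦ by simp [h] at hd
  have hexcess : HasExcess d e := hasExcess_of_two_pow_dvd (he ▸ pow_padicValNat_dvd)
  have hdvd : 2 ^ (s2 n + (2 * s2 n + e)) ∣ W d n := by
    rw [pow_add]
    exact mul_dvd_mul (two_pow_s2_dvd_choose_two_mul n) (hexcess n hn)
  have hW : W d n ≠ 0 := (Nat.mul_pos (Nat.choose_pos (by lia)) (Wstar_pos hd_pos n)).ne'
  have := (padicValNat_dvd_iff_le hW).1 hdvd
  lia

theorem stmt_4 (d n : ℕ) (hd : 0 < d) (hd2 : 3 ≤ padicValNat 2 d) (hn : 0 < n) :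
    3 * s2 n + (padicValNat 2 d - 2) ≤ padicValNat 2 (W d n) :=
  stmt_4_general d n (by lia) hn
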